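/- arXiv:2102.12035 — 2 statements merged into one kernel-verified Lean document; each statement's English description precedes it below -/
import Mathlib

section
/- Claim 1. Let 𝒰₁,𝒰₂ be finite sets and let p be a joint pmf of the form p(x₁,x₂,u₁,u₂,y) = p(x₁) p(x₂) p(u₁|x₁) p(u₂|x₂) p(y|u₁,u₂), whose (X₁,X₂)-marginal is that of four i.i.d. uniform bits and whose (X₁,X₂,Y)-marginal equals the Example distribution q_{X₁X₂Y}. If H(X₁|U₁) > 0 and H(X₂|U₂) > 0, then there exists k ∈ {1,2} such that for every u₁ with P(U₁=u₁) > 0 and every u₂ with P(U₂=u₂) > 0, one has H(X₁ₖ|U₁=u₁) = 0 and H(X₂ₖ|U₂=u₂) = 0. -/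
open Finset

/-- A probability mass function on a finite type. -/
def IsPMF {α : Type*} [Fintype α] (p : α → ℝ) : Prop :=
  (∀ a, 0 ≤ p a) ∧ ∑ a, p a = 1

/-- Marginal (pushforward) of a pmf `p` on `Ω` under the map `f`. -/
noncomputable def marg {Ω β : Type*} [Fintype Ω] [DecidableEq β]
    (p : Ω → ℝ) (f : Ω → β) (b : β) : ℝ :=
  ∑ ω : Ω, if f ω = b then p ω else 0

/-- Shannon entropy (in bits) of a pmf given as a function. -/
noncomputable def entPMF {β : Type*} [Fintype β] (r : β → ℝ) : ℝ :=
  -∑ b : β, r b * Real.logb 2 (r b)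

/-- Entropy (in bits) of the random variable `f` under the joint pmf `p`. -/
noncomputable def ent {Ω β : Type*} [Fintype Ω] [Fintype β] [DecidableEq β]
    (p : Ω → ℝ) (f : Ω → β) : ℝ :=
  entPMF (fun b => marg p f b)

/-- Conditional entropy `H(f | g)`. -/
noncomputable def condEnt {Ω β γ : Type*} [Fintype Ω] [Fintype β] [Fintype γ]
    [DecidableEq β] [DecidableEq γ] (p : Ω → ℝ) (f : Ω → β) (g : Ω → γ) : ℝ :=
  ent p (fun ω => (f ω, g ω)) - ent p g

/-- Mutual information `I(f ; g)`. -/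
noncomputable def mi {Ω β γ : Type*} [Fintype Ω] [Fintype β] [Fintype γ]
    [DecidableEq β] [DecidableEq γ] (p : Ω → ℝ) (f : Ω → β) (g : Ω → γ) : ℝ :=
  ent p f + ent p g - ent p (fun ω => (f ω, g ω))

/-- Conditional mutual information `I(f ; g | h)`. -/
noncomputable def cmi {Ω β γ δ : Type*} [Fintype Ω] [Fintype β] [Fintype γ] [Fintype δ]
    [DecidableEq β] [DecidableEq γ] [DecidableEq δ]
    (p : Ω → ℝ) (f : Ω → β) (g : Ω → γ) (h : Ω → δ) : ℝ :=
  ent p (fun ω => (f ω, h ω)) + ent p (fun ω => (g ω, h ω))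
    - ent p (fun ω => (f ω, g ω, h ω)) - ent p h

/-- The conditional pmf of `f` given the event `g = c`, under the joint pmf `p`. -/
noncomputable def condPMF {Ω β γ : Type*} [Fintype Ω] [DecidableEq β] [DecidableEq γ]
    (p : Ω → ℝ) (f : Ω → β) (g : Ω → γ) (c : γ) : β → ℝ :=
  fun b => marg p (fun ω => (f ω, g ω)) (b, c) / marg p g c

/-- `bsel x j` is the `j`-th bit of the two-bit string `x`. -/
def bsel (x : Bool × Bool) (j : Fin 2) : Bool := if j = 0 then x.1 else x.2

/-- The Example distribution: `X₁ = (X₁₁, X₁₂)` and `X₂ = (X₂₁, X₂₂)` are four i.i.d.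
uniform bits, `J` is uniform on `{1,2}` independent of `(X₁, X₂)`, and
`Y = (X₁J, X₂J)`; `qEx` is the induced joint pmf of `(X₁, X₂, Y)`. -/
noncomputable def qEx : (Bool × Bool) × (Bool × Bool) × (Bool × Bool) → ℝ :=
  fun a => ∑ j : Fin 2,
    (1 / 32 : ℝ) * (if a.2.2 = (bsel a.1 j, bsel a.2.1 j) then 1 else 0)

/-!
Only supports matter. Every pair `(u₁, u₂)` has an output `y` of positive probability, and the
marginal constraint makes `y` a selection `(x₁ₖ, x₂ₖ)` for all `x₁`, `x₂` compatible with `u₁`,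
`u₂`, where `k` may vary with `x₁`, `x₂`. Let `u₁` be compatible with `x ≠ x'`, and fix `u₂`.

If `x` and `x'` differ in both coordinates, they can yield the same `y` only by selecting different
coordinates, so both coordinates of `x₂` equal the second component of `y`; thus `u₂` determines
`X₂`. This cannot happen for a `u₂` compatible with two strings, so `x` and `x'` agree in some
coordinate `k`. As they differ in the other one, they cannot both select it, so `x₂ₖ` is the second
component of `y`: every `u₂` determines `X₂ₖ`. Exchanging the users, every `u₁` determines `X₁ₖ`.
-/

section JointSelection

variable {A B : Type*}

/-- `y` is an output of the selection channel on the strings `x` and `z`: one coordinate, common to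
both strings, is chosen and its two letters are emitted. -/
def IsJointSelection (x : Fin 2 → A) (z : Fin 2 → B) (y : A × B) : Prop :=
  ∃ k, y = (x k, z k)

namespace IsJointSelection

variable {x x' : Fin 2 → A} {z : Fin 2 → B} {y : A × B}

theorem swap (h : IsJointSelection x z y) : IsJointSelection z x y.swap := by
  obtain ⟨k, rfl⟩ := h
  exact ⟨k, rfl⟩

theorem eq_const_of_forall_ne (hx : ∀ k, x k ≠ x' k) (h : IsJointSelection x z y)
    (h' : IsJointSelection x' z y) : z = Function.const _ y.2 := by
  obtain ⟨i, rfl⟩ := h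
  obtain ⟨j, hj⟩ := h'
  obtain ⟨hxij, hzij⟩ := Prod.mk.inj hj
  have hij : i ≠ j := fun hij => hx i (hxij.trans (congrArg x' hij.symm))
  funext k
  obtain rfl | rfl : k = i ∨ k = j := by omega
  · rfl
  · exact hzij.symm

theorem apply_eq_snd_of_ne {k : Fin 2} (hne : x ≠ x') (hk : x k = x' k)
    (h : IsJointSelection x z y) (h' : IsJointSelection x' z y) : z k = y.2 := by
  obtain ⟨i, rfl⟩ := h
  obtain ⟨j, hj⟩ := h'
  obtain ⟨hxij, hzij⟩ := Prod.mk.inj hj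
  by_cases hik : i = k
  · rw [hik]
  by_cases hjk : j = k
  · rw [← hjk, hzij]
  obtain rfl : i = j := by omega
  refine absurd (funext fun l => ?_) hne
  obtain rfl | rfl : l = k ∨ l = i := by omega
  · exact hk
  · exact hxij

end IsJointSelection

theorem exists_apply_eq_of_common_selection {x x' : Fin 2 → A} {T : Set (Fin 2 → B)} {y : A × B}
    (h : ∀ z ∈ T, IsJointSelection x z y) (h' : ∀ z ∈ T, IsJointSelection x' z y)
    (hT : T.Nontrivial) : ∃ k, x k = x' k := by
  by_contra! hx
  obtain ⟨z, hz, z', hz', hne⟩ := hT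
  exact hne <| ((h z hz).eq_const_of_forall_ne hx (h' z hz)).trans
    ((h z' hz').eq_const_of_forall_ne hx (h' z' hz')).symm

theorem subsingleton_eval_image_of_common_selection {x x' : Fin 2 → A} {T : Set (Fin 2 → B)}
    {y : A × B} {k : Fin 2} (hne : x ≠ x') (hk : x k = x' k)
    (h : ∀ z ∈ T, IsJointSelection x z y) (h' : ∀ z ∈ T, IsJointSelection x' z y) :
    (Function.eval k '' T).Subsingleton := by
  have apply_eq_snd : ∀ z ∈ T, z k = y.2 := fun z hz =>
    (h z hz).apply_eq_snd_of_ne hne hk (h' z hz)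
  rintro _ ⟨z, hz, rfl⟩ _ ⟨z', hz', rfl⟩
  exact (apply_eq_snd z hz).trans (apply_eq_snd z' hz').symm

theorem exists_forall_subsingleton_eval_image {U V : Type*} {S : U → Set (Fin 2 → A)}
    {T : V → Set (Fin 2 → B)}
    (hST : ∀ u v, ∃ y, ∀ x ∈ S u, ∀ z ∈ T v, IsJointSelection x z y)
    (hS : ∃ u, (S u).Nontrivial) (hT : ∃ v, (T v).Nontrivial) :
    ∃ k, (∀ u, (Function.eval k '' S u).Subsingleton) ∧
      ∀ v, (Function.eval k '' T v).Subsingleton := by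
  choose y hy using hST
  obtain ⟨u₀, x, hx, x', hx', hxx'⟩ := hS
  obtain ⟨v₀, hTv₀⟩ := hT
  obtain ⟨k, hk⟩ := exists_apply_eq_of_common_selection (hy u₀ v₀ x hx) (hy u₀ v₀ x' hx') hTv₀
  have hTk : ∀ v, (Function.eval k '' T v).Subsingleton := fun v =>
    subsingleton_eval_image_of_common_selection hxx' hk (hy u₀ v x hx) (hy u₀ v x' hx')
  obtain ⟨z, hz, z', hz', hzz'⟩ := hTv₀
  have hzk : z k = z' k :=
    hTk v₀ (Set.mem_image_of_mem _ hz) (Set.mem_image_of_mem _ hz')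
  exact ⟨k, fun u => subsingleton_eval_image_of_common_selection hzz' hzk
    (fun w hw => (hy u v₀ w hw z hz).swap) (fun w hw => (hy u v₀ w hw z' hz').swap), hTk⟩

end JointSelection

section Entropy

variable {Ω β γ : Type*}

/-- The values that `f` takes with nonzero mass, under the weights `p`, on the event `g = c`. -/
def condSupport (p : Ω → ℝ) (f : Ω → β) (g : Ω → γ) (c : γ) : Set β :=
  f '' {ω | g ω = c ∧ p ω ≠ 0}

theorem image_condSupport {δ : Type*} (φ : β → δ) (p : Ω → ℝ) (f : Ω → β) (g : Ω → γ) (c : γ) :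
    φ '' condSupport p f g c = condSupport p (fun ω => φ (f ω)) g c :=
  Set.image_image _ _ _

theorem entPMF_eq_zero_of_forall_eq_zero_or_one [Fintype β] {r : β → ℝ}
    (h : ∀ b, r b = 0 ∨ r b = 1) : entPMF r = 0 := by
  refine neg_eq_zero.mpr (Finset.sum_eq_zero fun b _ => ?_)
  rcases h b with hb | hb <;> simp [hb]

variable [Fintype Ω] [DecidableEq β] [DecidableEq γ] {p : Ω → ℝ} {f : Ω → β} {g : Ω → γ}

theorem marg_pair_eq_zero_of_notMem_condSupport {b : β} {c : γ}
    (hb : b ∉ condSupport p f g c) : marg p (fun ω => (f ω, g ω)) (b, c) = 0 := by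
  refine Finset.sum_eq_zero fun ω _ => ?_
  split_ifs with h
  · obtain ⟨hf, hg⟩ := Prod.mk.inj h
    by_contra hp
    exact hb ⟨ω, ⟨hg, hp⟩, hf⟩
  · rfl

theorem marg_pair_eq_marg_of_condSupport_subset {b : β} {c : γ}
    (h : condSupport p f g c ⊆ {b}) : marg p (fun ω => (f ω, g ω)) (b, c) = marg p g c := by
  refine Finset.sum_congr rfl fun ω _ => ?_
  by_cases hω : g ω = c ∧ p ω ≠ 0
  · have hf : f ω = b := h ⟨ω, hω, rfl⟩
    simp [hf]
  · have hp : g ω = c → p ω = 0 := by simpa using hω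
    by_cases hg : g ω = c <;> simp [hg, hp]

theorem marg_pair_eq_zero_or_eq_marg {c : γ} (h : (condSupport p f g c).Subsingleton) (b : β) :
    marg p (fun ω => (f ω, g ω)) (b, c) = 0 ∨
      marg p (fun ω => (f ω, g ω)) (b, c) = marg p g c := by
  by_cases hb : b ∈ condSupport p f g c
  · exact .inr (marg_pair_eq_marg_of_condSupport_subset fun _ hb' => h hb' hb)
  · exact .inl (marg_pair_eq_zero_of_notMem_condSupport hb)

variable [Fintype β]

theorem sum_marg_pair (p : Ω → ℝ) (f : Ω → β) (g : Ω → γ) (c : γ) :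
    ∑ b, marg p (fun ω => (f ω, g ω)) (b, c) = marg p g c := by
  unfold marg
  rw [Finset.sum_comm]
  refine Finset.sum_congr rfl fun ω _ => ?_
  simp only [Prod.mk.injEq, ite_and, Finset.sum_ite_eq, Finset.mem_univ, if_true]

theorem entPMF_condPMF_eq_zero_of_subsingleton {c : γ} (h : (condSupport p f g c).Subsingleton) :
    entPMF (condPMF p f g c) = 0 := by
  refine entPMF_eq_zero_of_forall_eq_zero_or_one fun b => ?_
  unfold condPMF
  rcases marg_pair_eq_zero_or_eq_marg h b with hb | hb <;> rw [hb]
  · exact .inl (zero_div _)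
  · exact (eq_or_ne (marg p g c) 0).imp (fun hc => by rw [hc, zero_div]) div_self

theorem condEnt_eq_zero_of_subsingleton [Fintype γ] (h : ∀ c, (condSupport p f g c).Subsingleton) :
    condEnt p f g = 0 := by
  have log_marg_pair (b : β) (c : γ) :
      marg p (fun ω => (f ω, g ω)) (b, c) * Real.logb 2 (marg p (fun ω => (f ω, g ω)) (b, c)) =
        marg p (fun ω => (f ω, g ω)) (b, c) * Real.logb 2 (marg p g c) := by
    rcases marg_pair_eq_zero_or_eq_marg (h c) b with hb | hb
    · rw [hb, zero_mul, zero_mul]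
    · rw [hb]
  unfold condEnt ent entPMF
  simp only [Fintype.sum_prod_type_right, log_marg_pair, ← Finset.sum_mul, sum_marg_pair, sub_self]

theorem exists_nontrivial_condSupport_of_condEnt_pos [Fintype γ] (h : 0 < condEnt p f g) :
    ∃ c, (condSupport p f g c).Nontrivial := by
  by_contra! hsub
  exact h.ne' (condEnt_eq_zero_of_subsingleton hsub)

end Entropy

theorem IsPMF.exists_ne_zero {α : Type*} [Fintype α] {r : α → ℝ} (hr : IsPMF r) :
    ∃ a, r a ≠ 0 := by
  obtain ⟨a, -, ha⟩ := Finset.exists_ne_zero_of_sum_ne_zero (hr.2.trans_ne one_ne_zero)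
  exact ⟨a, ha⟩

theorem sum_sum_ne_zero_of_nonneg {ι κ : Type*} [Fintype ι] [Fintype κ] {f : ι → κ → ℝ}
    (hf : ∀ i j, 0 ≤ f i j) {i : ι} {j : κ} (hij : f i j ≠ 0) : ∑ i, ∑ j, f i j ≠ 0 := by
  have inner_pos : 0 < ∑ j, f i j :=
    Finset.sum_pos' (fun j _ => hf i j) ⟨j, Finset.mem_univ j, (hf i j).lt_of_ne' hij⟩
  exact (Finset.sum_pos' (fun i _ => Finset.sum_nonneg fun j _ => hf i j)
    ⟨i, Finset.mem_univ i, inner_pos⟩).ne'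

theorem exists_forall_condSupport_ne_zero {X₁ X₂ U₁ U₂ Y : Type*}
    {w₁ : X₁ → U₁ → ℝ} {w₂ : X₂ → U₂ → ℝ} {κ : U₁ → U₂ → Y → ℝ} {p : X₁ × X₂ × U₁ × U₂ × Y → ℝ}
    (hp : ∀ x₁ x₂ u₁ u₂ y, p (x₁, x₂, u₁, u₂, y) = w₁ x₁ u₁ * w₂ x₂ u₂ * κ u₁ u₂ y)
    {u₁ : U₁} {u₂ : U₂} (hκ : ∃ y, κ u₁ u₂ y ≠ 0) :
    ∃ y, ∀ x₁ ∈ condSupport p (fun ω => ω.1) (fun ω => ω.2.2.1) u₁,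
      ∀ x₂ ∈ condSupport p (fun ω => ω.2.1) (fun ω => ω.2.2.2.1) u₂,
        p (x₁, x₂, u₁, u₂, y) ≠ 0 := by
  obtain ⟨y, hy⟩ := hκ
  refine ⟨y, ?_⟩
  rintro _ ⟨⟨x₁, _, _, _, _⟩, ⟨rfl, h₁⟩, rfl⟩ _ ⟨⟨_, x₂, _, _, _⟩, ⟨rfl, h₂⟩, rfl⟩
  rw [hp] at h₁ h₂ ⊢
  exact mul_ne_zero (mul_ne_zero (left_ne_zero_of_mul (left_ne_zero_of_mul h₁))
    (right_ne_zero_of_mul (left_ne_zero_of_mul h₂))) hy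

theorem bsel_injective : Function.Injective bsel := fun _ _ h =>
  Prod.ext (congrFun h 0) (congrFun h 1)

theorem isJointSelection_of_qEx_ne_zero {x z y : Bool × Bool} (h : qEx (x, z, y) ≠ 0) :
    IsJointSelection (bsel x) (bsel z) y := by
  obtain ⟨k, -, hk⟩ := Finset.exists_ne_zero_of_sum_ne_zero h
  exact ⟨k, of_not_not fun hy => hk (by rw [if_neg hy, mul_zero])⟩

/-- The strings `X₁`, `X₂` are read off letter by letter by `e₁`, `e₂`, and `wᵢ xᵢ uᵢ` stands for
`p(xᵢ) p(uᵢ | xᵢ)`. -/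
theorem example_claim1_general
    {X₁ X₂ U₁ U₂ A B : Type*} [Fintype X₁] [Fintype X₂] [Fintype U₁] [Fintype U₂] [Fintype A]
    [Fintype B] [DecidableEq X₁] [DecidableEq X₂] [DecidableEq U₁] [DecidableEq U₂]
    [DecidableEq A] [DecidableEq B]
    {e₁ : X₁ → Fin 2 → A} {e₂ : X₂ → Fin 2 → B}
    (he₁ : Function.Injective e₁) (he₂ : Function.Injective e₂)
    (w₁ : X₁ → U₁ → ℝ) (w₂ : X₂ → U₂ → ℝ) (κ : U₁ → U₂ → A × B → ℝ)
    (hκ : ∀ u₁ u₂, IsPMF (κ u₁ u₂))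
    {p : X₁ × X₂ × U₁ × U₂ × (A × B) → ℝ} (hp_nonneg : ∀ ω, 0 ≤ p ω)
    (hp : ∀ x₁ x₂ u₁ u₂ y, p (x₁, x₂, u₁, u₂, y) = w₁ x₁ u₁ * w₂ x₂ u₂ * κ u₁ u₂ y)
    (hsel : ∀ x₁ x₂ y, ∑ u₁, ∑ u₂, p (x₁, x₂, u₁, u₂, y) ≠ 0 →
      IsJointSelection (e₁ x₁) (e₂ x₂) y)
    (hH₁ : 0 < condEnt p (fun ω => ω.1) (fun ω => ω.2.2.1))
    (hH₂ : 0 < condEnt p (fun ω => ω.2.1) (fun ω => ω.2.2.2.1)) :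
    ∃ k : Fin 2,
      (∀ u₁, 0 < marg p (fun ω => ω.2.2.1) u₁ →
        entPMF (condPMF p (fun ω => e₁ ω.1 k) (fun ω => ω.2.2.1) u₁) = 0) ∧
      (∀ u₂, 0 < marg p (fun ω => ω.2.2.2.1) u₂ →
        entPMF (condPMF p (fun ω => e₂ ω.2.1 k) (fun ω => ω.2.2.2.1) u₂) = 0) := by
  let S u := e₁ '' condSupport p (fun ω => ω.1) (fun ω => ω.2.2.1) u
  let T u := e₂ '' condSupport p (fun ω => ω.2.1) (fun ω => ω.2.2.2.1) u
  have common_output : ∀ u₁ u₂, ∃ y, ∀ x ∈ S u₁, ∀ z ∈ T u₂, IsJointSelection x z y := by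
    intro u₁ u₂
    obtain ⟨y, hy⟩ := exists_forall_condSupport_ne_zero hp (hκ u₁ u₂).exists_ne_zero
    refine ⟨y, Set.forall_mem_image.mpr fun x₁ hx₁ => Set.forall_mem_image.mpr fun x₂ hx₂ => ?_⟩
    exact hsel x₁ x₂ y (sum_sum_ne_zero_of_nonneg (fun _ _ => hp_nonneg _) (hy x₁ hx₁ x₂ hx₂))
  have hS : ∃ u, (S u).Nontrivial :=
    (exists_nontrivial_condSupport_of_condEnt_pos hH₁).imp fun _ hu => hu.image he₁
  have hT : ∃ u, (T u).Nontrivial :=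
    (exists_nontrivial_condSupport_of_condEnt_pos hH₂).imp fun _ hu => hu.image he₂
  obtain ⟨k, hSk, hTk⟩ := exists_forall_subsingleton_eval_image common_output hS hT
  refine ⟨k, fun u _ => entPMF_condPMF_eq_zero_of_subsingleton ?_,
    fun u _ => entPMF_condPMF_eq_zero_of_subsingleton ?_⟩
  · simpa only [S, image_condSupport] using hSk u
  · simpa only [T, image_condSupport] using hTk u

/-- **Claim 1.**  For any joint pmf
`p(x₁,x₂,u₁,u₂,y) = p(x₁) p(x₂) p(u₁|x₁) p(u₂|x₂) p(y|u₁,u₂)` with `(X₁,X₂)`-marginal four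
i.i.d. uniform bits and `(X₁,X₂,Y)`-marginal equal to the Example distribution `qEx`, if
`H(X₁|U₁) > 0` and `H(X₂|U₂) > 0` then there is a `k ∈ {1,2}` such that for all `u₁, u₂` of
positive probability, `H(X₁ₖ|U₁=u₁) = 0` and `H(X₂ₖ|U₂=u₂) = 0`. -/
theorem example_claim1
    {U1 U2 : Type} [Fintype U1] [Fintype U2] [DecidableEq U1] [DecidableEq U2]
    (pU1c : Bool × Bool → U1 → ℝ) (pU2c : Bool × Bool → U2 → ℝ)
    (pYc : U1 → U2 → Bool × Bool → ℝ)
    (hpU1 : ∀ x1, IsPMF (pU1c x1)) (hpU2 : ∀ x2, IsPMF (pU2c x2))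
    (hpY : ∀ u1 u2, IsPMF (pYc u1 u2))
    (p : (Bool × Bool) × (Bool × Bool) × U1 × U2 × (Bool × Bool) → ℝ)
    (hpdef : ∀ x1 x2 u1 u2 y,
      p (x1, x2, u1, u2, y) = (1 / 16 : ℝ) * pU1c x1 u1 * pU2c x2 u2 * pYc u1 u2 y)
    (hmarg : ∀ x1 x2 y,
      (∑ u1 : U1, ∑ u2 : U2, (1 / 16 : ℝ) * pU1c x1 u1 * pU2c x2 u2 * pYc u1 u2 y)
        = qEx (x1, x2, y))
    (hH1 : 0 < condEnt p (fun ω => ω.1) (fun ω => ω.2.2.1))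
    (hH2 : 0 < condEnt p (fun ω => ω.2.1) (fun ω => ω.2.2.2.1)) :
    ∃ k : Fin 2,
      (∀ u1 : U1, 0 < marg p (fun ω => ω.2.2.1) u1 →
        entPMF (condPMF p (fun ω => bsel ω.1 k) (fun ω => ω.2.2.1) u1) = 0) ∧
      (∀ u2 : U2, 0 < marg p (fun ω => ω.2.2.2.1) u2 →
        entPMF (condPMF p (fun ω => bsel ω.2.1 k) (fun ω => ω.2.2.2.1) u2) = 0) := by
  have hp_nonneg : ∀ ω, 0 ≤ p ω := fun ⟨x1, x2, u1, u2, y⟩ => by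
    have := (hpU1 x1).1 u1
    have := (hpU2 x2).1 u2
    have := (hpY u1 u2).1 y
    rw [hpdef]
    positivity
  exact example_claim1_general bsel_injective bsel_injective (fun x u => 1 / 16 * pU1c x u)
    pU2c pYc hpY hp_nonneg hpdef
    (fun x1 x2 y h => isJointSelection_of_qEx_ne_zero (by simpa only [hpdef, hmarg] using h))
    hH1 hH2
end

section
/- Information identities for deterministic functions with conditionally independent sources (Appendix D). Let 𝒳₁,𝒳₂,𝒵,𝒰₁,𝒰₂,𝒴 be finite sets and let p be a joint pmf of the form p(x₁,x₂,z,u₁,u₂,y) = p(z) p(x₁|z) p(x₂|z) p(u₁|x₁) p(u₂|x₂) p(y|u₁,u₂,z), and suppose Y is a deterministic function of (X₁,X₂,Z), i.e., H(Y|X₁,X₂,Z) = 0. Then: (i) I(U₁;X₁,Y|X₂,Z) = I(U₁;X₁|Z); (ii) I(U₂;X₂,Y|X₁,Z) = I(U₂;X₂|Z); and (iii) I(U₁,U₂;X₁,X₂,Y|Z) = I(U₁;X₁|Z) + I(U₂;X₂|Z). -/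
/-!
The argument rests on two facts: `(U₁, X₁)` and `(U₂, X₂)` are conditionally independent given
`Z`, and `Y` is almost surely a function of `(X₁, X₂, Z)`. The second fact allows `Y` to be dropped
whenever it stands next to `X₁, X₂, Z`. By the first, `H(A, B, Z) = H(A, Z) + H(B, Z) - H(Z)`
for every `A` computed from `(U₁, X₁)` and every `B` computed from `(U₂, X₂)`, and substituting
this into the remaining entropies gives each identity.
-/

open Finset

section Marginal

variable {Ω α β δ : Type*} [Fintype Ω] [DecidableEq α] [DecidableEq β] [DecidableEq δ] {p : Ω → ℝ}

lemma marg_eq_sum_marg_prod [Fintype α] (p : Ω → ℝ) (f : Ω → α) (g : Ω → β) (b : β) :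
    marg p g b = ∑ a, marg p (fun ω => (f ω, g ω)) (a, b) := by
  simp only [marg, Prod.mk.injEq, ite_and]
  rw [Finset.sum_comm]
  simp only [Finset.sum_ite_eq, Finset.mem_univ, if_true]

lemma marg_comp_prod [Fintype α] (p : Ω → ℝ) (f : Ω → α) (φ : α → δ) (g : Ω → β) (d : δ) (b : β) :
    marg p (fun ω => (φ (f ω), g ω)) (d, b)
      = ∑ a, if φ a = d then marg p (fun ω => (f ω, g ω)) (a, b) else 0 := by
  have hjoint : ∀ a, marg p (fun ω => (f ω, φ (f ω), g ω)) (a, d, b)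
      = if φ a = d then marg p (fun ω => (f ω, g ω)) (a, b) else 0 := fun a => by
    simp only [marg, Prod.mk.injEq]
    split_ifs with hd
    · exact Finset.sum_congr rfl fun ω _ => if_congr (by grind) rfl rfl
    · exact Finset.sum_eq_zero fun ω _ => if_neg (by grind)
  rw [marg_eq_sum_marg_prod p f]
  exact Finset.sum_congr rfl fun a _ => hjoint a

lemma marg_nonneg (hp : ∀ ω, 0 ≤ p ω) (f : Ω → δ) (d : δ) : 0 ≤ marg p f d :=
  Finset.sum_nonneg fun ω _ => by
    split_ifs
    exacts [hp ω, le_rfl]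

lemma marg_apply_pos (hp : ∀ ω, 0 ≤ p ω) (f : Ω → δ) {ω : Ω} (hω : p ω ≠ 0) :
    0 < marg p f (f ω) :=
  calc 0 < p ω := (hp ω).lt_of_ne' hω
    _ = if f ω = f ω then p ω else 0 := (if_pos rfl).symm
    _ ≤ marg p f (f ω) := Finset.single_le_sum (f := fun ω' => if f ω' = f ω then p ω' else 0)
        (fun ω' _ => by
          split_ifs
          exacts [hp ω', le_rfl])
        (Finset.mem_univ ω)

lemma marg_prod_le (hp : ∀ ω, 0 ≤ p ω) (f : Ω → α) (g : Ω → β) (a : α) (b : β) :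
    marg p (fun ω => (f ω, g ω)) (a, b) ≤ marg p g b :=
  Finset.sum_le_sum fun ω _ => by
    have := hp ω
    grind

end Marginal

/-- `f` is almost surely a function of `g` under `p`, in the form: on the support of `p`, equal
values of `g` force equal values of `f`. -/
def IsDeterminedBy {Ω α β : Type*} (p : Ω → ℝ) (f : Ω → α) (g : Ω → β) : Prop :=
  ∀ ω ω', p ω ≠ 0 → p ω' ≠ 0 → g ω = g ω' → f ω = f ω'

namespace IsDeterminedBy

variable {Ω α β γ : Type*} {p : Ω → ℝ} {f : Ω → α} {g : Ω → β} {h : Ω → γ}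

lemma of_eq_comp (φ : β → α) (hφ : f = φ ∘ g) : IsDeterminedBy p f g :=
  fun _ _ _ _ hg => hφ ▸ congrArg φ hg

lemma trans (hfg : IsDeterminedBy p f g) (hgh : IsDeterminedBy p g h) : IsDeterminedBy p f h :=
  fun ω ω' hω hω' heq => hfg ω ω' hω hω' (hgh ω ω' hω hω' heq)

lemma prodMk (hfh : IsDeterminedBy p f h) (hgh : IsDeterminedBy p g h) :
    IsDeterminedBy p (fun ω => (f ω, g ω)) h :=
  fun ω ω' hω hω' heq => Prod.ext (hfh ω ω' hω hω' heq) (hgh ω ω' hω hω' heq)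

end IsDeterminedBy

section Entropy

variable {Ω α β γ δ : Type*} [Fintype Ω] [Fintype α] [Fintype β] [Fintype γ] [Fintype δ]
  [DecidableEq α] [DecidableEq β] [DecidableEq γ] [DecidableEq δ] {p : Ω → ℝ}

lemma ent_eq_neg_sum_logb_marg (p : Ω → ℝ) (f : Ω → α) :
    ent p f = -∑ ω, p ω * Real.logb 2 (marg p f (f ω)) := by
  have hterm : ∀ a, marg p f a * Real.logb 2 (marg p f a)
      = ∑ ω, if f ω = a then p ω * Real.logb 2 (marg p f a) else 0 := fun a => by
    conv_lhs => enter [1]; unfold marg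
    simp only [Finset.sum_mul, ite_mul, zero_mul]
  rw [ent, entPMF, Finset.sum_congr rfl fun a _ => hterm a, Finset.sum_comm]
  simp only [Finset.sum_ite_eq, Finset.mem_univ, if_true]

lemma marg_prod_eq_marg_of_condEnt_eq_zero (hp : ∀ ω, 0 ≤ p ω) {f : Ω → α} {g : Ω → β}
    (h : condEnt p f g = 0) {ω : Ω} (hω : p ω ≠ 0) :
    marg p (fun ω => (f ω, g ω)) (f ω, g ω) = marg p g (g ω) := by
  -- `H(f | g)` is the average of `log (P(g) / P(f, g)) ≥ 0`, which must vanish on the support.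
  let loss (ω : Ω) : ℝ := p ω * (Real.logb 2 (marg p g (g ω))
    - Real.logb 2 (marg p (fun ω => (f ω, g ω)) (f ω, g ω)))
  have hpos : ∀ {ω}, p ω ≠ 0 → 0 < marg p (fun ω => (f ω, g ω)) (f ω, g ω) :=
    marg_apply_pos hp (fun ω => (f ω, g ω))
  have hle : ∀ ω, marg p (fun ω => (f ω, g ω)) (f ω, g ω) ≤ marg p g (g ω) := fun ω =>
    marg_prod_le hp f g (f ω) (g ω)
  have hloss_nonneg : ∀ ω ∈ Finset.univ, 0 ≤ loss ω := fun ω _ => by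
    rcases eq_or_ne (p ω) 0 with h0 | h0
    · simp [loss, h0]
    · exact mul_nonneg (hp ω)
        (sub_nonneg.2 (Real.logb_le_logb_of_le one_lt_two (hpos h0) (hle ω)))
  have hloss_sum : ∑ ω, loss ω = 0 := by
    rw [condEnt, ent_eq_neg_sum_logb_marg, ent_eq_neg_sum_logb_marg] at h
    simp only [loss, mul_sub, Finset.sum_sub_distrib]
    linarith
  have hloss : loss ω = 0 :=
    (Finset.sum_eq_zero_iff_of_nonneg hloss_nonneg).1 hloss_sum ω (Finset.mem_univ ω)
  have hlog := sub_eq_zero.1 ((mul_eq_zero.1 hloss).resolve_left hω)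
  exact Real.logb_injOn_pos one_lt_two (hpos hω) ((hpos hω).trans_le (hle ω)) hlog.symm

lemma isDeterminedBy_of_condEnt_eq_zero (hp : ∀ ω, 0 ≤ p ω) {f : Ω → α} {g : Ω → β}
    (h : condEnt p f g = 0) : IsDeterminedBy p f g := by
  intro ω ω' hω hω' hg
  by_contra hne
  have hpos : 0 < marg p (fun ω => (f ω, g ω)) (f ω', g ω) :=
    hg ▸ marg_apply_pos hp (fun ω => (f ω, g ω)) hω'
  have hlt : marg p (fun ω => (f ω, g ω)) (f ω, g ω) < marg p g (g ω) := by
    rw [marg_eq_sum_marg_prod p f g (g ω)]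
    exact Finset.single_lt_sum (f := fun a => marg p (fun ω => (f ω, g ω)) (a, g ω))
      (Ne.symm hne) (Finset.mem_univ _) (Finset.mem_univ _) hpos
      fun a _ _ => marg_nonneg hp _ _
  exact hlt.ne (marg_prod_eq_marg_of_condEnt_eq_zero hp h hω)

lemma ent_congr {f : Ω → α} {g : Ω → β} (hfg : IsDeterminedBy p f g)
    (hgf : IsDeterminedBy p g f) : ent p f = ent p g := by
  have hmarg : ∀ ω, p ω ≠ 0 → marg p f (f ω) = marg p g (g ω) := fun ω hω =>
    Finset.sum_congr rfl fun ω' _ => by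
      rcases eq_or_ne (p ω') 0 with h0 | h0
      · simp only [h0, ite_self]
      · exact if_congr ⟨hgf ω' ω h0 hω, hfg ω' ω h0 hω⟩ rfl rfl
  rw [ent_eq_neg_sum_logb_marg, ent_eq_neg_sum_logb_marg]
  congr 1
  refine Finset.sum_congr rfl fun ω _ => ?_
  rcases eq_or_ne (p ω) 0 with h0 | h0
  · simp only [h0, zero_mul]
  · rw [hmarg ω h0]

lemma ent_prod_assoc (p : Ω → ℝ) (f : Ω → α) (g : Ω → β) (h : Ω → γ) :
    ent p (fun ω => ((f ω, g ω), h ω)) = ent p (fun ω => (f ω, g ω, h ω)) :=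
  ent_congr (.of_eq_comp (fun (a, b, c) => ((a, b), c)) rfl)
    (.of_eq_comp (fun ((a, b), c) => (a, b, c)) rfl)

lemma cmi_congr_right {f : Ω → α} {g : Ω → β} {g' : Ω → δ} {h : Ω → γ}
    (hg : IsDeterminedBy p g fun ω => (g' ω, h ω))
    (hg' : IsDeterminedBy p g' fun ω => (g ω, h ω)) :
    cmi p f g h = cmi p f g' h := by
  have hpair : IsDeterminedBy p (fun ω => (g ω, h ω)) fun ω => (g' ω, h ω) :=
    hg.prodMk (.of_eq_comp Prod.snd rfl)
  have hpair' : IsDeterminedBy p (fun ω => (g' ω, h ω)) fun ω => (g ω, h ω) :=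
    hg'.prodMk (.of_eq_comp Prod.snd rfl)
  have htriple : ent p (fun ω => (f ω, g ω, h ω)) = ent p (fun ω => (f ω, g' ω, h ω)) :=
    ent_congr (.prodMk (.of_eq_comp Prod.fst rfl) (hpair.trans (.of_eq_comp Prod.snd rfl)))
      (.prodMk (.of_eq_comp Prod.fst rfl) (hpair'.trans (.of_eq_comp Prod.snd rfl)))
  rw [cmi, cmi, ent_congr hpair hpair', htriple]

end Entropy

/-- Conditional independence of `f` and `g` given `h` under the mass function `p`. The identity
`P(a, b | c) = P(a | c) P(b | c)` is multiplied by `P(c)²`, so that values `c` of mass zero need no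
exception. -/
def IsCondIndep {Ω α β γ : Type*} [Fintype Ω] [DecidableEq α] [DecidableEq β] [DecidableEq γ]
    (p : Ω → ℝ) (f : Ω → α) (g : Ω → β) (h : Ω → γ) : Prop :=
  ∀ a b c, marg p (fun ω => (f ω, g ω, h ω)) (a, b, c) * marg p h c
    = marg p (fun ω => (f ω, h ω)) (a, c) * marg p (fun ω => (g ω, h ω)) (b, c)

namespace IsCondIndep

section Basic

variable {Ω α β γ δ : Type*} [Fintype Ω]
  [DecidableEq α] [DecidableEq β] [DecidableEq γ] [DecidableEq δ]
  {p : Ω → ℝ} {f : Ω → α} {g : Ω → β} {h : Ω → γ}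

lemma of_marg_eq_mul [Finite α] [Finite β] {F : α → γ → ℝ} {G : β → γ → ℝ}
    (hFG : ∀ a b c, marg p (fun ω => (f ω, g ω, h ω)) (a, b, c) = F a c * G b c) :
    IsCondIndep p f g h := by
  cases nonempty_fintype α
  cases nonempty_fintype β
  have hleft : ∀ a c, marg p (fun ω => (f ω, h ω)) (a, c) = F a c * ∑ b, G b c := fun a c => by
    have hswap : ∀ b, marg p (fun ω => (g ω, f ω, h ω)) (b, a, c) = F a c * G b c := fun b => by
      rw [← hFG]
      simp only [marg, Prod.mk.injEq, and_left_comm]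
    rw [marg_eq_sum_marg_prod p g, Finset.mul_sum]
    exact Finset.sum_congr rfl fun b _ => hswap b
  have hright : ∀ b c, marg p (fun ω => (g ω, h ω)) (b, c) = (∑ a, F a c) * G b c := fun b c => by
    rw [marg_eq_sum_marg_prod p f, Finset.sum_mul]
    exact Finset.sum_congr rfl fun a _ => hFG a b c
  have hcond : ∀ c, marg p h c = (∑ a, F a c) * ∑ b, G b c := fun c => by
    rw [marg_eq_sum_marg_prod p f, Finset.sum_mul]
    exact Finset.sum_congr rfl fun a _ => hleft a c
  intro a b c
  rw [hFG, hleft, hright, hcond]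
  ring

lemma symm (hind : IsCondIndep p f g h) : IsCondIndep p g f h := by
  intro b a c
  have hswap : marg p (fun ω => (g ω, f ω, h ω)) (b, a, c)
      = marg p (fun ω => (f ω, g ω, h ω)) (a, b, c) := by
    simp only [marg, Prod.mk.injEq, and_left_comm]
  rw [hswap, hind a b c, mul_comm]

lemma comp_left [Finite α] (hind : IsCondIndep p f g h) (φ : α → δ) :
    IsCondIndep p (fun ω => φ (f ω)) g h := by
  cases nonempty_fintype α
  intro d b c
  rw [marg_comp_prod p f φ, marg_comp_prod p f φ, Finset.sum_mul, Finset.sum_mul]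
  refine Finset.sum_congr rfl fun a _ => ?_
  rw [ite_mul, ite_mul, zero_mul, zero_mul, hind a b c]

lemma comp_right [Finite β] (hind : IsCondIndep p f g h) (φ : β → δ) :
    IsCondIndep p f (fun ω => φ (g ω)) h :=
  (hind.symm.comp_left φ).symm

end Basic

section Entropy

variable {Ω α β γ : Type*} [Fintype Ω] [Fintype α] [Fintype β] [Fintype γ]
  [DecidableEq α] [DecidableEq β] [DecidableEq γ] {p : Ω → ℝ}

lemma ent_prod (hp : ∀ ω, 0 ≤ p ω) {f : Ω → α} {g : Ω → β} {h : Ω → γ}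
    (hind : IsCondIndep p f g h) :
    ent p (fun ω => (f ω, g ω, h ω))
      = ent p (fun ω => (f ω, h ω)) + ent p (fun ω => (g ω, h ω)) - ent p h := by
  have hlog : ∀ ω, p ω ≠ 0 →
      Real.logb 2 (marg p (fun ω => (f ω, g ω, h ω)) (f ω, g ω, h ω))
          + Real.logb 2 (marg p h (h ω))
        = Real.logb 2 (marg p (fun ω => (f ω, h ω)) (f ω, h ω))
          + Real.logb 2 (marg p (fun ω => (g ω, h ω)) (g ω, h ω)) := fun ω hω => by
    rw [← Real.logb_mul (marg_apply_pos hp (fun ω => (f ω, g ω, h ω)) hω).ne'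
        (marg_apply_pos hp h hω).ne', hind,
      Real.logb_mul (marg_apply_pos hp (fun ω => (f ω, h ω)) hω).ne'
        (marg_apply_pos hp (fun ω => (g ω, h ω)) hω).ne']
  simp only [ent_eq_neg_sum_logb_marg]
  rw [eq_sub_iff_add_eq, ← neg_add, ← neg_add, ← Finset.sum_add_distrib,
    ← Finset.sum_add_distrib]
  congr 1
  refine Finset.sum_congr rfl fun ω _ => ?_
  rcases eq_or_ne (p ω) 0 with h0 | h0
  · simp only [h0, zero_mul]
  · rw [← mul_add, ← mul_add, hlog ω h0]

lemma cmi_prod_cond_eq {κ : Type*} [Fintype κ] [DecidableEq κ] (hp : ∀ ω, 0 ≤ p ω)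
    {f : Ω → α} {g : Ω → β} {k : Ω → κ} {h : Ω → γ}
    (hind : IsCondIndep p (fun ω => (f ω, g ω)) k h) :
    cmi p f g (fun ω => (k ω, h ω)) = cmi p f g h := by
  have hf : ent p (fun ω => (f ω, k ω, h ω)) = _ := (hind.comp_left Prod.fst).ent_prod hp
  have hg : ent p (fun ω => (g ω, k ω, h ω)) = _ := (hind.comp_left Prod.snd).ent_prod hp
  have hfg := hind.ent_prod hp
  rw [ent_prod_assoc, ent_prod_assoc] at hfg
  rw [cmi, cmi, hf, hg, hfg]
  ring

lemma cmi_prod_prod {α' β' : Type*} [Fintype α'] [Fintype β'] [DecidableEq α'] [DecidableEq β']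
    (hp : ∀ ω, 0 ≤ p ω) {f : Ω → α} {f' : Ω → α'} {g : Ω → β} {g' : Ω → β'} {h : Ω → γ}
    (hind : IsCondIndep p (fun ω => (f ω, f' ω)) (fun ω => (g ω, g' ω)) h) :
    cmi p (fun ω => (f ω, g ω)) (fun ω => (f' ω, g' ω)) h = cmi p f f' h + cmi p g g' h := by
  have hfst : ent p (fun ω => (f ω, g ω, h ω)) = _ :=
    ((hind.comp_left Prod.fst).comp_right Prod.fst).ent_prod hp
  have hsnd : ent p (fun ω => (f' ω, g' ω, h ω)) = _ :=
    ((hind.comp_left Prod.snd).comp_right Prod.snd).ent_prod hp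
  have hregroup : ent p (fun ω => ((f ω, g ω), (f' ω, g' ω), h ω))
      = ent p (fun ω => ((f ω, f' ω), (g ω, g' ω), h ω)) :=
    ent_congr (.of_eq_comp (fun ((a, b), (a', b'), c) => ((a, a'), (b, b'), c)) rfl)
      (.of_eq_comp (fun ((a, b), (a', b'), c) => ((a, a'), (b, b'), c)) rfl)
  rw [cmi, cmi, cmi, ent_prod_assoc, ent_prod_assoc, hfst, hsnd, hregroup, hind.ent_prod hp,
    ent_prod_assoc, ent_prod_assoc]
  ring

end Entropy

end IsCondIndep

lemma cmi_prod_determined_eq {Ω α β γ κ δ : Type*}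
    [Fintype Ω] [Fintype α] [Fintype β] [Fintype γ] [Fintype κ] [Fintype δ]
    [DecidableEq α] [DecidableEq β] [DecidableEq γ] [DecidableEq κ] [DecidableEq δ]
    {p : Ω → ℝ} (hp : ∀ ω, 0 ≤ p ω)
    {f : Ω → α} {g : Ω → β} {k : Ω → κ} {h : Ω → γ} {y : Ω → δ}
    (hind : IsCondIndep p (fun ω => (f ω, g ω)) k h)
    (hy : IsDeterminedBy p y fun ω => (g ω, k ω, h ω)) :
    cmi p f (fun ω => (g ω, y ω)) (fun ω => (k ω, h ω)) = cmi p f g h :=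
  calc cmi p f (fun ω => (g ω, y ω)) (fun ω => (k ω, h ω))
      = cmi p f g (fun ω => (k ω, h ω)) := cmi_congr_right
        (.prodMk (.of_eq_comp Prod.fst rfl) hy) (.of_eq_comp (fun ((b, _), _) => b) rfl)
    _ = cmi p f g h := hind.cmi_prod_cond_eq hp

theorem det_function_identities_cond_indep_general
    {Ω X1 X2 Z U1 U2 Y : Type*}
    [Fintype Ω] [Fintype X1] [Fintype X2] [Fintype Z] [Fintype U1] [Fintype U2] [Fintype Y]
    [DecidableEq X1] [DecidableEq X2] [DecidableEq Z]
    [DecidableEq U1] [DecidableEq U2] [DecidableEq Y]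
    {p : Ω → ℝ} (hp : ∀ ω, 0 ≤ p ω)
    {x1 : Ω → X1} {x2 : Ω → X2} {z : Ω → Z} {u1 : Ω → U1} {u2 : Ω → U2} {y : Ω → Y}
    (hind : IsCondIndep p (fun ω => (u1 ω, x1 ω)) (fun ω => (u2 ω, x2 ω)) z)
    (hdet : condEnt p y (fun ω => (x1 ω, x2 ω, z ω)) = 0) :
    cmi p u1 (fun ω => (x1 ω, y ω)) (fun ω => (x2 ω, z ω)) = cmi p u1 x1 z ∧
    cmi p u2 (fun ω => (x2 ω, y ω)) (fun ω => (x1 ω, z ω)) = cmi p u2 x2 z ∧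
    cmi p (fun ω => (u1 ω, u2 ω)) (fun ω => (x1 ω, x2 ω, y ω)) z
      = cmi p u1 x1 z + cmi p u2 x2 z := by
  have hy : IsDeterminedBy p y fun ω => (x1 ω, x2 ω, z ω) :=
    isDeterminedBy_of_condEnt_eq_zero hp hdet
  have hy_swap : IsDeterminedBy p y fun ω => (x2 ω, x1 ω, z ω) :=
    hy.trans (.of_eq_comp (fun (b, a, c) => (a, b, c)) rfl)
  have hy_assoc : IsDeterminedBy p y fun ω => ((x1 ω, x2 ω), z ω) :=
    hy.trans (.of_eq_comp (fun ((a, b), c) => (a, b, c)) rfl)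
  refine ⟨cmi_prod_determined_eq hp (hind.comp_right Prod.snd) hy,
    cmi_prod_determined_eq hp (hind.symm.comp_right Prod.snd) hy_swap, ?_⟩
  calc cmi p (fun ω => (u1 ω, u2 ω)) (fun ω => (x1 ω, x2 ω, y ω)) z
      = cmi p (fun ω => (u1 ω, u2 ω)) (fun ω => (x1 ω, x2 ω)) z := cmi_congr_right
        (.prodMk (.of_eq_comp (fun ((a, _), _) => a) rfl)
          (.prodMk (.of_eq_comp (fun ((_, b), _) => b) rfl) hy_assoc))
        (.of_eq_comp (fun ((a, b, _), _) => (a, b)) rfl)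
    _ = cmi p u1 x1 z + cmi p u2 x2 z := hind.cmi_prod_prod hp

section FactoredLaw

variable {X1 X2 Z U1 U2 Y : Type*}
  {pZ : Z → ℝ} {pX1c : Z → X1 → ℝ} {pX2c : Z → X2 → ℝ}
  {pU1c : X1 → U1 → ℝ} {pU2c : X2 → U2 → ℝ} {pYc : U1 → U2 → Z → Y → ℝ}
  {p : X1 × X2 × Z × U1 × U2 × Y → ℝ}

lemma factored_law_nonneg
    (hZ : ∀ z, 0 ≤ pZ z) (hX1 : ∀ z x1, 0 ≤ pX1c z x1) (hX2 : ∀ z x2, 0 ≤ pX2c z x2)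
    (hU1 : ∀ x1 u1, 0 ≤ pU1c x1 u1) (hU2 : ∀ x2 u2, 0 ≤ pU2c x2 u2)
    (hY : ∀ u1 u2 z y, 0 ≤ pYc u1 u2 z y)
    (hpdef : ∀ x1 x2 z u1 u2 y,
      p (x1, x2, z, u1, u2, y) =
        pZ z * pX1c z x1 * pX2c z x2 * pU1c x1 u1 * pU2c x2 u2 * pYc u1 u2 z y)
    (ω : X1 × X2 × Z × U1 × U2 × Y) :
    0 ≤ p ω := by
  obtain ⟨x1, x2, z, u1, u2, y⟩ := ω
  rw [hpdef]
  have := hZ z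
  have := hX1 z x1
  have := hX2 z x2
  have := hU1 x1 u1
  have := hU2 x2 u2
  have := hY u1 u2 z y
  positivity

lemma isCondIndep_of_factored_law
    [Fintype X1] [Fintype X2] [Fintype Z] [Fintype U1] [Fintype U2] [Fintype Y]
    [DecidableEq X1] [DecidableEq X2] [DecidableEq Z] [DecidableEq U1] [DecidableEq U2]
    (hY : ∀ u1 u2 z, ∑ y, pYc u1 u2 z y = 1)
    (hpdef : ∀ x1 x2 z u1 u2 y,
      p (x1, x2, z, u1, u2, y) =
        pZ z * pX1c z x1 * pX2c z x2 * pU1c x1 u1 * pU2c x2 u2 * pYc u1 u2 z y) :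
    IsCondIndep p (fun ω => (ω.2.2.2.1, ω.1)) (fun ω => (ω.2.2.2.2.1, ω.2.1))
      (fun ω => ω.2.2.1) := by
  refine IsCondIndep.of_marg_eq_mul
    (F := fun a z => pZ z * pX1c z a.2 * pU1c a.2 a.1)
    (G := fun b z => pX2c z b.2 * pU2c b.2 b.1) ?_
  rintro ⟨u1, x1⟩ ⟨u2, x2⟩ z
  calc marg p (fun ω => ((ω.2.2.2.1, ω.1), (ω.2.2.2.2.1, ω.2.1), ω.2.2.1))
        ((u1, x1), (u2, x2), z)
      = ∑ y, p (x1, x2, z, u1, u2, y) := by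
        rw [marg, ← Finset.sum_filter]
        refine Finset.sum_nbij' (fun ω => ω.2.2.2.2.2) (fun y => (x1, x2, z, u1, u2, y))
          ?_ ?_ ?_ ?_ ?_ <;> grind
    _ = pZ z * pX1c z x1 * pX2c z x2 * pU1c x1 u1 * pU2c x2 u2 := by
        simp only [hpdef, ← Finset.mul_sum, hY, mul_one]
    _ = pZ z * pX1c z x1 * pU1c x1 u1 * (pX2c z x2 * pU2c x2 u2) := by ring

end FactoredLaw

/-- **Information identities for deterministic functions with conditionally independent
sources (Appendix D).**  For any joint pmf
`p(x₁,x₂,z,u₁,u₂,y) = p(z) p(x₁|z) p(x₂|z) p(u₁|x₁) p(u₂|x₂) p(y|u₁,u₂,z)` with `Y` a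
deterministic function of `(X₁,X₂,Z)`:
(i) `I(U₁;X₁,Y|X₂,Z) = I(U₁;X₁|Z)`;
(ii) `I(U₂;X₂,Y|X₁,Z) = I(U₂;X₂|Z)`;
(iii) `I(U₁,U₂;X₁,X₂,Y|Z) = I(U₁;X₁|Z) + I(U₂;X₂|Z)`. -/
theorem det_function_identities_cond_indep
    {X1 X2 Z U1 U2 Y : Type}
    [Fintype X1] [Fintype X2] [Fintype Z] [Fintype U1] [Fintype U2] [Fintype Y]
    [DecidableEq X1] [DecidableEq X2] [DecidableEq Z]
    [DecidableEq U1] [DecidableEq U2] [DecidableEq Y]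
    (pZ : Z → ℝ) (pX1c : Z → X1 → ℝ) (pX2c : Z → X2 → ℝ)
    (pU1c : X1 → U1 → ℝ) (pU2c : X2 → U2 → ℝ) (pYc : U1 → U2 → Z → Y → ℝ)
    (hZ : IsPMF pZ) (hX1 : ∀ z, IsPMF (pX1c z)) (hX2 : ∀ z, IsPMF (pX2c z))
    (hU1 : ∀ x1, IsPMF (pU1c x1)) (hU2 : ∀ x2, IsPMF (pU2c x2))
    (hY : ∀ u1 u2 z, IsPMF (pYc u1 u2 z))
    (p : X1 × X2 × Z × U1 × U2 × Y → ℝ)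
    (hpdef : ∀ x1 x2 z u1 u2 y,
      p (x1, x2, z, u1, u2, y) =
        pZ z * pX1c z x1 * pX2c z x2 * pU1c x1 u1 * pU2c x2 u2 * pYc u1 u2 z y)
    (hdet : condEnt p (fun ω => ω.2.2.2.2.2) (fun ω => (ω.1, ω.2.1, ω.2.2.1)) = 0) :
    cmi p (fun ω => ω.2.2.2.1) (fun ω => (ω.1, ω.2.2.2.2.2))
        (fun ω => (ω.2.1, ω.2.2.1))
      = cmi p (fun ω => ω.2.2.2.1) (fun ω => ω.1) (fun ω => ω.2.2.1) ∧
    cmi p (fun ω => ω.2.2.2.2.1) (fun ω => (ω.2.1, ω.2.2.2.2.2))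
        (fun ω => (ω.1, ω.2.2.1))
      = cmi p (fun ω => ω.2.2.2.2.1) (fun ω => ω.2.1) (fun ω => ω.2.2.1) ∧
    cmi p (fun ω => (ω.2.2.2.1, ω.2.2.2.2.1)) (fun ω => (ω.1, ω.2.1, ω.2.2.2.2.2))
        (fun ω => ω.2.2.1)
      = cmi p (fun ω => ω.2.2.2.1) (fun ω => ω.1) (fun ω => ω.2.2.1)
        + cmi p (fun ω => ω.2.2.2.2.1) (fun ω => ω.2.1) (fun ω => ω.2.2.1) := by
  have hp : ∀ ω, 0 ≤ p ω := factored_law_nonneg hZ.1 (fun z => (hX1 z).1) (fun z => (hX2 z).1)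
    (fun x1 => (hU1 x1).1) (fun x2 => (hU2 x2).1) (fun u1 u2 z => (hY u1 u2 z).1) hpdef
  exact det_function_identities_cond_indep_general hp
    (isCondIndep_of_factored_law (fun u1 u2 z => (hY u1 u2 z).2) hpdef) hdet
end
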